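/- arXiv:2404.10349 — 4 statements merged into one kernel-verified Lean document; each statement's English description precedes it below -/
import Mathlib

section
/- Let a₁ = e^{iπ/4}·diag(−1,1,1,1) and a₂ = e^{iπ/4}·diag(1,−1,1,1) as 4×4 complex matrices. Then there is no invertible 4×4 complex matrix c and no integer r such that c⁻¹·a₂·c = i^r·(a₁·a₂). (Consequently, the order-3 automorphism a₁ ↦ a₂, a₂ ↦ a₁a₂ of the rephasing group generated by a₁ and a₂ cannot be realized by conjugation with any invertible matrix, even up to a power of i.) -/
open Complex Matrix

/-! Conjugation preserves the trace, and a scalar multiple of a traceless matrix is traceless. Up to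
nonzero factors, `a₂` and `a₁ * a₂` are diagonal sign matrices. Such a matrix is traceless exactly
when its two signs are equally frequent, which holds for `a₁ * a₂` (two of each) but not for `a₂` (a
single `-1`). No scalar, in particular no power of `I`, can make up for this. -/

open scoped Finset symmDiff

theorem trace_eq_zero_of_conj_eq_smul {n R : Type*} [Fintype n] [DecidableEq n] [CommRing R]
    {A B c : Matrix n n R} {μ : R} (hc : IsUnit c) (hB : trace B = 0)
    (h : c⁻¹ * A * c = μ • B) : trace A = 0 := by
  rw [← trace_conj' hc A, h, trace_smul, hB, smul_zero]

section SignDiagonal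

variable {n : Type*} [DecidableEq n]

/-- The diagonal matrix of signs with entry `-1` at the indices in `s` and `1` elsewhere. Indexing
by the set of negative entries makes multiplication of such matrices the symmetric difference. -/
def signDiagonal (R : Type*) [Ring R] (s : Finset n) : Matrix n n R :=
  diagonal fun i => if i ∈ s then -1 else 1

theorem signDiagonal_mul_signDiagonal {R : Type*} [Ring R] [Fintype n] (s t : Finset n) :
    signDiagonal R s * signDiagonal R t = signDiagonal R (s ∆ t) := by
  rw [signDiagonal, signDiagonal, diagonal_mul_diagonal, signDiagonal]
  congr 1
  ext i
  by_cases hs : i ∈ s <;> by_cases ht : i ∈ t <;> simp [Finset.mem_symmDiff, hs, ht]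

theorem trace_signDiagonal {R : Type*} [Ring R] [Fintype n] (s : Finset n) :
    trace (signDiagonal R s) = Fintype.card n - 2 * #s := by
  have entry (i : n) : (if i ∈ s then (-1 : R) else 1) = 1 - if i ∈ s then 2 else 0 := by
    split_ifs <;> norm_num
  simp only [signDiagonal, trace_diagonal, entry, Finset.sum_sub_distrib]
  simp [mul_two, two_mul]

theorem signDiagonal_fin_four_singleton_zero {R : Type*} [Ring R] :
    signDiagonal R {(0 : Fin 4)} = diagonal ![-1, 1, 1, 1] :=
  congrArg diagonal (by ext i; fin_cases i <;> simp)

theorem signDiagonal_fin_four_singleton_one {R : Type*} [Ring R] :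
    signDiagonal R {(1 : Fin 4)} = diagonal ![1, -1, 1, 1] :=
  congrArg diagonal (by ext i; fin_cases i <;> simp)

end SignDiagonal

theorem no_conjugation_Z2Z2_order3_general {n R : Type*} [Fintype n] [DecidableEq n] [CommRing R]
    [NoZeroDivisors R] {s t : Finset n} (hst : (Fintype.card n : R) = 2 * #(s ∆ t))
    (ht : (Fintype.card n : R) ≠ 2 * #t) (u : R) {v : R} (hv : v ≠ 0) :
    ¬ ∃ (c : Matrix n n R) (μ : R), IsUnit c ∧
      c⁻¹ * (v • signDiagonal R t) * c = μ • ((u • signDiagonal R s) * (v • signDiagonal R t)) := by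
  rintro ⟨c, μ, hc, h⟩
  have trace_mul : trace ((u • signDiagonal R s) * (v • signDiagonal R t)) = 0 := by
    rw [smul_mul_smul_comm, signDiagonal_mul_signDiagonal, trace_smul, trace_signDiagonal, hst,
      sub_self, smul_zero]
  have trace_eq : v * (Fintype.card n - 2 * #t) = 0 := by
    rw [← trace_signDiagonal, ← smul_eq_mul, ← trace_smul]
    exact trace_eq_zero_of_conj_eq_smul hc trace_mul h
  exact mul_ne_zero hv (sub_ne_zero.mpr ht) trace_eq

/-- With `a₁ = e^{iπ/4}·diag(−1,1,1,1)` and `a₂ = e^{iπ/4}·diag(1,−1,1,1)`, there is no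
invertible 4×4 complex matrix `c` and no integer `r` with `c⁻¹·a₂·c = i^r·(a₁·a₂)`:
the order-3 automorphism `a₁ ↦ a₂, a₂ ↦ a₁a₂` cannot be realized by conjugation, even up
to a power of `i`. -/
theorem no_conjugation_Z2Z2_order3 :
    ∀ a₁ a₂ : Matrix (Fin 4) (Fin 4) ℂ,
      a₁ = Complex.exp (Real.pi * Complex.I / 4) • Matrix.diagonal ![-1, 1, 1, 1] →
      a₂ = Complex.exp (Real.pi * Complex.I / 4) • Matrix.diagonal ![1, -1, 1, 1] →
      ¬ ∃ (c : Matrix (Fin 4) (Fin 4) ℂ) (r : ℤ),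
          IsUnit c ∧ c⁻¹ * a₂ * c = (Complex.I ^ r) • (a₁ * a₂) := by
  rintro _ _ rfl rfl ⟨c, r, hc, h⟩
  rw [← signDiagonal_fin_four_singleton_zero, ← signDiagonal_fin_four_singleton_one] at h
  have card_symmDiff : #({0} ∆ {1} : Finset (Fin 4)) = 2 := by decide
  exact no_conjugation_Z2Z2_order3_general (by norm_num [card_symmDiff]) (by norm_num) _
    (exp_ne_zero _) ⟨c, _, hc, h⟩
end

section
/- Let a₁ = e^{iπ/4}·diag(i,−1,−i,1) and a₂ = e^{iπ/4}·diag(1,−1,1,1) as 4×4 complex matrices. Suppose b is an invertible 4×4 complex matrix and r₁, r₂ are integers such that a₁·b = i^{r₁}·b·a₁³ and a₂·b = i^{r₂}·b·a₂. Then i^{r₁} = −i, i^{r₂} = 1, and b has nonzero entries only in the positions (1,3), (2,2), (3,1), (4,4); that is, b_{jk} = 0 for every (j,k) not in {(1,3),(2,2),(3,1),(4,4)}. -/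
open Complex Matrix

/-!
Let `c₁`, `c₂` be the scalars in the two relations. Since `b` is invertible, `a₁` is similar to
`c₁ • a₁ ^ 3` and `a₂` to `c₂ • a₂`, and similar matrices have equal traces. As `a₂` has nonzero
trace, `c₂ = 1`. The traces of `a₁` and `a₁ ^ 3` vanish, but those of `a₁ * a₂` and `a₁ ^ 3 * a₂` do
not, so multiplying the two relations determines `c₁`. Finally, an intertwiner of two diagonal
matrices is supported where their eigenvalues agree, and `a₁` has simple spectrum.
-/

section Intertwiner

theorem semiconjBy_smul_of_mul_eq_smul {R A : Type*} [Mul A] [SMul R A] [SMulCommClass R A A]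
    {c : R} {b x y : A} (h : y * b = c • (b * x)) : SemiconjBy b (c • x) y := by
  rw [SemiconjBy, mul_smul_comm, h]

variable {n R : Type*} [Fintype n] [DecidableEq n] {b x y : Matrix n n R}

theorem trace_eq_of_semiconjBy [CommSemiring R] (hb : IsUnit b) (h : SemiconjBy b x y) :
    x.trace = y.trace := by
  obtain ⟨u, rfl⟩ := hb
  rw [← trace_units_conj u x, h.eq, u.mul_inv_cancel_right]

theorem eq_one_of_semiconjBy_smul_self [CommSemiring R] [IsCancelMulZero R] {c : R} (hb : IsUnit b)
    (hx : x.trace ≠ 0) (h : SemiconjBy b (c • x) x) : c = 1 := by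
  have htrace : c * x.trace = x.trace := by
    simpa only [trace_smul, smul_eq_mul] using trace_eq_of_semiconjBy hb h
  exact mul_right_cancel₀ hx (htrace.trans (one_mul _).symm)

theorem eq_of_semiconjBy_diagonal_of_ne_zero [CommSemiring R] [IsCancelMulZero R]
    {d e : n → R} (h : SemiconjBy b (diagonal d) (diagonal e)) {j k : n} (hjk : b j k ≠ 0) :
    d k = e j := by
  have hentry : b j k * d k = e j * b j k := by
    simpa only [mul_diagonal, diagonal_mul] using congrFun₂ h.eq j k
  exact mul_left_cancel₀ hjk (hentry.trans (mul_comm _ _))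

end Intertwiner

section RootsOfUnity

variable {R : Type*} [CommRing R] [NoZeroDivisors R]

theorem pow_four_eq_neg_one_of_isPrimitiveRoot_eight {ζ : R} (hζ : IsPrimitiveRoot ζ 8) :
    ζ ^ 4 = -1 :=
  (hζ.pow (by norm_num) (by norm_num : 8 = 4 * 2)).eq_neg_one_of_two_right

theorem two_ne_zero_of_isPrimitiveRoot_eight {ζ : R} (hζ : IsPrimitiveRoot ζ 8) :
    (2 : R) ≠ 0 := by
  intro htwo
  have hpow : ζ ^ 4 = 1 := by
    linear_combination pow_four_eq_neg_one_of_isPrimitiveRoot_eight hζ - htwo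
  exact hζ.pow_ne_one_of_pos_of_lt (by norm_num) (by norm_num) hpow

theorem vec_eq_pow_of_isPrimitiveRoot_four {ι : R} (hι : IsPrimitiveRoot ι 4) :
    ![ι, -1, -ι, 1] = fun j : Fin 4 ↦ ι ^ (j + 1 : ℕ) := by
  have hsq : ι ^ 2 = -1 :=
    (hι.pow (by norm_num) (by norm_num : 4 = 2 * 2)).eq_neg_one_of_two_right
  funext j
  fin_cases j
  · simp
  · simp [hsq]
  · simp [pow_succ ι 2, hsq]
  · simp [hι.pow_eq_one]

theorem mem_of_vec_pow_three_eq {ι : R} (hι : IsPrimitiveRoot ι 4) {j k : Fin 4}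
    (h : ![ι, -1, -ι, 1] k ^ 3 = ![ι, -1, -ι, 1] j) :
    (j, k) ∈ ({(0, 2), (1, 1), (2, 0), (3, 3)} : Set (Fin 4 × Fin 4)) := by
  have hmod : ((k + 1) * 3 : ℕ) ≡ j + 1 [MOD 4] := by
    simp only [vec_eq_pow_of_isPrimitiveRoot_four hι, ← pow_mul] at h
    simpa only [← hι.eq_orderOf] using
      (hι.isOfFinOrder (by norm_num)).pow_eq_pow_iff_modEq.mp h
  have hsolve : ∀ j k : Fin 4, ((k + 1) * 3 : ℕ) ≡ j + 1 [MOD 4] →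
      (j, k) = (0, 2) ∨ (j, k) = (1, 1) ∨ (j, k) = (2, 0) ∨ (j, k) = (3, 3) := by
    decide
  exact hsolve j k hmod

end RootsOfUnity

section Generators

variable {R : Type*} [CommRing R]

/-- The matrix `a₁`, with an arbitrary `ζ` in place of `e^{iπ/4}` and `ζ ^ 2` in place of `i`. -/
def firstGenerator (ζ : R) : Matrix (Fin 4) (Fin 4) R :=
  ζ • diagonal ![ζ ^ 2, -1, -ζ ^ 2, 1]

/-- The matrix `a₂`, with an arbitrary `ζ` in place of `e^{iπ/4}`. -/
def secondGenerator (ζ : R) : Matrix (Fin 4) (Fin 4) R :=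
  ζ • diagonal ![1, -1, 1, 1]

theorem firstGenerator_pow (ζ : R) (m : ℕ) :
    firstGenerator ζ ^ m = ζ ^ m • diagonal (![ζ ^ 2, -1, -ζ ^ 2, 1] ^ m) := by
  rw [firstGenerator, smul_pow, diagonal_pow]

theorem trace_secondGenerator (ζ : R) : (secondGenerator ζ).trace = 2 * ζ := by
  simp only [secondGenerator, trace_smul, trace_diagonal, Fin.sum_univ_four, cons_val, smul_eq_mul]
  ring

theorem trace_firstGenerator_pow_mul_secondGenerator (ζ : R) {m : ℕ} (hm : Odd m) :
    (firstGenerator ζ ^ m * secondGenerator ζ).trace = 2 * ζ ^ (m + 1) := by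
  simp only [firstGenerator_pow, secondGenerator, smul_mul_smul_comm, diagonal_mul_diagonal,
    trace_smul, trace_diagonal, Fin.sum_univ_four, Pi.pow_apply, cons_val, smul_eq_mul,
    hm.neg_pow, one_pow]
  ring

variable [IsDomain R] {ζ c₁ c₂ : R} {b : Matrix (Fin 4) (Fin 4) R}

theorem eq_one_of_semiconjBy_secondGenerator (hζ : IsPrimitiveRoot ζ 8) (hb : IsUnit b)
    (h₂ : SemiconjBy b (c₂ • secondGenerator ζ) (secondGenerator ζ)) : c₂ = 1 := by
  refine eq_one_of_semiconjBy_smul_self hb ?_ h₂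
  rw [trace_secondGenerator]
  exact mul_ne_zero (two_ne_zero_of_isPrimitiveRoot_eight hζ) (hζ.ne_zero (by norm_num))

theorem eq_neg_sq_of_semiconjBy_generators (hζ : IsPrimitiveRoot ζ 8) (hb : IsUnit b)
    (h₁ : SemiconjBy b (c₁ • firstGenerator ζ ^ 3) (firstGenerator ζ))
    (h₂ : SemiconjBy b (secondGenerator ζ) (secondGenerator ζ)) : c₁ = -ζ ^ 2 := by
  have htrace : c₁ * (2 * ζ ^ 4) = 2 * ζ ^ 2 := by
    have h := trace_eq_of_semiconjBy hb (h₁.mul_right h₂)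
    rwa [smul_mul_assoc, trace_smul, smul_eq_mul,
      trace_firstGenerator_pow_mul_secondGenerator ζ (by decide),
      ← pow_one (firstGenerator ζ), trace_firstGenerator_pow_mul_secondGenerator ζ odd_one] at h
  apply mul_left_cancel₀ (two_ne_zero_of_isPrimitiveRoot_eight hζ)
  linear_combination 2 * c₁ * pow_four_eq_neg_one_of_isPrimitiveRoot_eight hζ - htrace

theorem mem_of_semiconjBy_firstGenerator (hζ : IsPrimitiveRoot ζ 8)
    (h₁ : SemiconjBy b (-ζ ^ 2 • firstGenerator ζ ^ 3) (firstGenerator ζ)) {j k : Fin 4}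
    (hjk : b j k ≠ 0) :
    (j, k) ∈ ({(0, 2), (1, 1), (2, 0), (3, 3)} : Set (Fin 4 × Fin 4)) := by
  have hι : IsPrimitiveRoot (ζ ^ 2) 4 := hζ.pow (by norm_num) (by norm_num)
  refine mem_of_vec_pow_three_eq hι (mul_left_cancel₀ (hζ.ne_zero (by norm_num)) ?_)
  have hscalar : -ζ ^ 2 * ζ ^ 3 = ζ := by
    linear_combination -ζ * pow_four_eq_neg_one_of_isPrimitiveRoot_eight hζ
  rw [firstGenerator_pow, smul_smul, hscalar, firstGenerator, ← diagonal_smul,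
    ← diagonal_smul] at h₁
  exact eq_of_semiconjBy_diagonal_of_ne_zero h₁ hjk

end Generators

theorem isPrimitiveRoot_exp_pi_mul_I_div_four :
    IsPrimitiveRoot (exp (Real.pi * I / 4)) 8 := by
  convert isPrimitiveRoot_exp 8 (by norm_num) using 2
  push_cast
  ring

theorem exp_pi_mul_I_div_four_sq : exp (Real.pi * I / 4) ^ 2 = I := by
  rw [← exp_nat_mul]
  convert exp_pi_div_two_mul_I using 2
  push_cast
  ring

theorem solution_shape_first_Z2_option1_general {R : Type*} [CommRing R] [IsDomain R]
    {ζ c₁ c₂ : R} {b : Matrix (Fin 4) (Fin 4) R} (hζ : IsPrimitiveRoot ζ 8) (hb : IsUnit b)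
    (h₁ : firstGenerator ζ * b = c₁ • (b * firstGenerator ζ ^ 3))
    (h₂ : secondGenerator ζ * b = c₂ • (b * secondGenerator ζ)) :
    c₁ = -ζ ^ 2 ∧ c₂ = 1 ∧
      ∀ j k, (j, k) ∉ ({(0, 2), (1, 1), (2, 0), (3, 3)} : Set (Fin 4 × Fin 4)) → b j k = 0 := by
  have hs₁ := semiconjBy_smul_of_mul_eq_smul h₁
  have hs₂ := semiconjBy_smul_of_mul_eq_smul h₂
  obtain rfl : c₂ = 1 := eq_one_of_semiconjBy_secondGenerator hζ hb hs₂
  rw [one_smul] at hs₂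
  obtain rfl : c₁ = -ζ ^ 2 := eq_neg_sq_of_semiconjBy_generators hζ hb hs₁ hs₂
  refine ⟨rfl, rfl, fun j k hjk ↦ ?_⟩
  by_contra hne
  exact hjk (mem_of_semiconjBy_firstGenerator hζ hs₁ hne)

/-- With `a₁ = e^{iπ/4}·diag(i,−1,−i,1)` and `a₂ = e^{iπ/4}·diag(1,−1,1,1)`, if an
invertible matrix `b` satisfies `a₁·b = i^{r₁}·b·a₁³` and `a₂·b = i^{r₂}·b·a₂`, then
`i^{r₁} = −i`, `i^{r₂} = 1`, and `b` is supported on the entries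
`(1,3), (2,2), (3,1), (4,4)` (0-indexed: `(0,2), (1,1), (2,0), (3,3)`). -/
theorem solution_shape_first_Z2_option1 :
    ∀ (a₁ a₂ b : Matrix (Fin 4) (Fin 4) ℂ) (r₁ r₂ : ℤ),
      a₁ = Complex.exp (Real.pi * Complex.I / 4) •
             Matrix.diagonal ![Complex.I, -1, -Complex.I, 1] →
      a₂ = Complex.exp (Real.pi * Complex.I / 4) • Matrix.diagonal ![1, -1, 1, 1] →
      IsUnit b →
      a₁ * b = (Complex.I ^ r₁) • (b * a₁ ^ 3) →
      a₂ * b = (Complex.I ^ r₂) • (b * a₂) →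
      Complex.I ^ r₁ = -Complex.I ∧ Complex.I ^ r₂ = 1 ∧
      ∀ j k : Fin 4,
        (j, k) ∉ ({((0 : Fin 4), (2 : Fin 4)), (1, 1), (2, 0), (3, 3)} :
          Set (Fin 4 × Fin 4)) → b j k = 0 := by
  rintro _ _ b r₁ r₂ rfl rfl hb h₁ h₂
  simpa only [exp_pi_mul_I_div_four_sq] using solution_shape_first_Z2_option1_general
    isPrimitiveRoot_exp_pi_mul_I_div_four hb
    (by simpa only [firstGenerator, exp_pi_mul_I_div_four_sq] using h₁) h₂
end

section
/- Let a₁ = e^{iπ/4}·diag(−1,1,1,1), a₂ = e^{iπ/4}·diag(1,−1,1,1), and a₃ = e^{iπ/4}·diag(1,1,−1,1) as 4×4 complex matrices. Then there is no invertible 4×4 complex matrix f and no integer r such that f⁻¹·a₃·f = i^r·(a₂·a₃). (Consequently, the order-7 automorphism a₁ ↦ a₃, a₂ ↦ a₁, a₃ ↦ a₂a₃ of the sign-flip group (ℤ/2)³ cannot be realized by conjugation with any invertible matrix, even up to a power of i; hence extensions by ℤ/7, and by any group containing ℤ/7, are impossible in the 4HDM.) -/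
open Complex Matrix

/-!
Conjugation preserves the trace. A diagonal sign matrix of size `n` with `k` entries `-1` has
trace `n - 2k`, so in size `4` a single sign flip has trace `2`, while the product of two distinct
ones has trace `0`, and so has every scalar multiple of that product.
-/

section Trace

variable {n R : Type*} [Fintype n] [DecidableEq n] [CommRing R]

theorem inv_mul_mul_ne_smul_of_trace_eq_zero {A B f : Matrix n n R} (hA : trace A ≠ 0)
    (hB : trace B = 0) (hf : IsUnit f) (c : R) : f⁻¹ * A * f ≠ c • B := by
  intro h
  apply hA
  calc trace A = trace (f⁻¹ * A * f) := (trace_conj' hf A).symm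
    _ = c • trace B := by rw [h, trace_smul]
    _ = 0 := by rw [hB, smul_zero]

end Trace

section SignFlip

variable {n : Type*} [DecidableEq n] (R : Type*) [CommRing R]

/-- The sign flip of the coordinates in `s`, i.e. the diagonal matrix with entries `-1` on `s` and
`1` elsewhere. Indexing by finite sets turns products into symmetric differences. -/
def signFlip (s : Finset n) : Matrix n n R :=
  diagonal fun i => if i ∈ s then -1 else 1

theorem signFlip_mul_signFlip [Fintype n] (s t : Finset n) :
    signFlip R s * signFlip R t = signFlip R (symmDiff s t) := by
  rw [signFlip, signFlip, diagonal_mul_diagonal, signFlip]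
  congr 1
  funext i
  by_cases hs : i ∈ s <;> by_cases ht : i ∈ t <;> simp [Finset.mem_symmDiff, hs, ht]

theorem trace_signFlip [Fintype n] (s : Finset n) :
    trace (signFlip R s) = Fintype.card n - 2 * s.card := by
  have entry_eq (i : n) : (if i ∈ s then -1 else 1 : R) = 1 - 2 * if i ∈ s then 1 else 0 := by
    split_ifs <;> ring
  simp only [signFlip, trace_diagonal, entry_eq, Finset.sum_sub_distrib, ← Finset.mul_sum,
    Finset.sum_boole, Finset.filter_univ_mem, Finset.sum_const, Finset.card_univ, nsmul_one]

theorem diagonal_eq_signFlip_singleton_one :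
    diagonal ![1, -1, 1, 1] = signFlip R ({1} : Finset (Fin 4)) := by
  rw [signFlip]
  congr 1
  funext i
  fin_cases i <;> rfl

theorem diagonal_eq_signFlip_singleton_two :
    diagonal ![1, 1, -1, 1] = signFlip R ({2} : Finset (Fin 4)) := by
  rw [signFlip]
  congr 1
  funext i
  fin_cases i <;> rfl

end SignFlip

theorem no_conjugation_Z2cubed_order7_general {R : Type*} [CommRing R] {ε : R} (hε : 2 * ε ≠ 0)
    {a₂ a₃ f : Matrix (Fin 4) (Fin 4) R} (h₂ : a₂ = ε • diagonal ![1, -1, 1, 1])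
    (h₃ : a₃ = ε • diagonal ![1, 1, -1, 1]) (hf : IsUnit f) (c : R) :
    f⁻¹ * a₃ * f ≠ c • (a₂ * a₃) := by
  rw [diagonal_eq_signFlip_singleton_one] at h₂
  rw [diagonal_eq_signFlip_singleton_two] at h₃
  have trace_a₃ : trace a₃ = 2 * ε := by
    rw [h₃, trace_smul, trace_signFlip, Fintype.card_fin, Finset.card_singleton, smul_eq_mul]
    push_cast
    ring
  have card_symmDiff : (symmDiff {1} {2} : Finset (Fin 4)).card = 2 := by decide
  have trace_a₂_mul_a₃ : trace (a₂ * a₃) = 0 := by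
    rw [h₂, h₃, smul_mul_smul_comm, signFlip_mul_signFlip, trace_smul, trace_signFlip,
      card_symmDiff, Fintype.card_fin, smul_eq_mul]
    push_cast
    ring
  exact inv_mul_mul_ne_smul_of_trace_eq_zero (trace_a₃ ▸ hε) trace_a₂_mul_a₃ hf c

/-- With `a₁ = e^{iπ/4}·diag(−1,1,1,1)`, `a₂ = e^{iπ/4}·diag(1,−1,1,1)` and
`a₃ = e^{iπ/4}·diag(1,1,−1,1)`, there is no invertible 4×4 complex matrix `f` and no
integer `r` with `f⁻¹·a₃·f = i^r·(a₂·a₃)`: the order-7 automorphism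
`a₁ ↦ a₃, a₂ ↦ a₁, a₃ ↦ a₂a₃` of the sign-flip group `(ℤ/2)³` cannot be realized by
conjugation, even up to a power of `i`. -/
theorem no_conjugation_Z2cubed_order7 :
    ∀ a₁ a₂ a₃ : Matrix (Fin 4) (Fin 4) ℂ,
      a₁ = Complex.exp (Real.pi * Complex.I / 4) • Matrix.diagonal ![-1, 1, 1, 1] →
      a₂ = Complex.exp (Real.pi * Complex.I / 4) • Matrix.diagonal ![1, -1, 1, 1] →
      a₃ = Complex.exp (Real.pi * Complex.I / 4) • Matrix.diagonal ![1, 1, -1, 1] →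
      ¬ ∃ (f : Matrix (Fin 4) (Fin 4) ℂ) (r : ℤ),
          IsUnit f ∧ f⁻¹ * a₃ * f = (Complex.I ^ r) • (a₂ * a₃) := by
  rintro a₁ a₂ a₃ - h₂ h₃ ⟨f, r, hf, h⟩
  exact no_conjugation_Z2cubed_order7_general (mul_ne_zero two_ne_zero (exp_ne_zero _)) h₂ h₃ hf _ h
end

section
/- Let ℤ/3 act on the elementary abelian group (ℤ/2)³ = (Fin 3 → ℤ/2) by cyclically permuting the three coordinates (the generator sends the coordinate function v to v ∘ σ where σ is a 3-cycle on the index set). Then the semidirect product (ℤ/2)³ ⋊ ℤ/3 formed with respect to this action is isomorphic to the direct product ℤ/2 × A₄, where A₄ is the alternating group on four letters. -/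
/-! Geometrically, `(ℤ/2)³ ⋊ ℤ/3` is the pyritohedral group of `3 × 3` signed matrices whose
underlying permutation is cyclic. It is the direct product of its centre `{±1}` and its rotation
subgroup, which permutes the four body diagonals of the cube as `A₄`. The reflection in the `i`-th
coordinate is `-1` times a half-turn, and half-turns act on the diagonals as double transpositions;
so the isomorphism sends the `i`-th basis vector of `(ℤ/2)³` to the generator of `ℤ/2` paired with
a double transposition, and the generator of `ℤ/3` to a 3-cycle permuting these. The resulting
homomorphism is injective on both factors, whose orders `8` and `3` are coprime, hence injective;
and both groups have order `24`. -/

open Equiv Multiplicative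

section SemidirectProduct

variable {N G H : Type*} [Group N] [Group G] [Group H] {φ : G →* MulAut N}
  {f : N →* H} {f' : G →* H}

lemma semidirectProduct_lift_injective_of_coprime_card
    (h : ∀ g, f.comp (φ g).toMonoidHom = (MulAut.conj (f' g)).toMonoidHom.comp f)
    (hf : Function.Injective f) (hf' : Function.Injective f')
    (hcard : (Nat.card N).Coprime (Nat.card G)) :
    Function.Injective (SemidirectProduct.lift f f' h) := by
  have hdisjoint : Disjoint f.range f'.range := by
    apply Subgroup.disjoint_of_coprime_natCard
    rwa [← Nat.card_congr (f.ofInjective hf).toEquiv, ← Nat.card_congr (f'.ofInjective hf').toEquiv]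
  rw [injective_iff_map_eq_one]
  rintro ⟨n, g⟩ (hng : f n * f' g = 1)
  obtain ⟨hn, hg⟩ := Subgroup.disjoint_iff_mul_eq_one.mp hdisjoint ⟨n, rfl⟩ ⟨g, rfl⟩ hng
  exact SemidirectProduct.ext ((map_eq_one_iff f hf).mp hn) ((map_eq_one_iff f' hf').mp hg)

lemma comp_mulAut_eq_conj_comp_of_closure_eq_top {S : Set G} (hS : Subgroup.closure S = ⊤)
    (h : ∀ g ∈ S, f.comp (φ g).toMonoidHom = (MulAut.conj (f' g)).toMonoidHom.comp f) (g : G) :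
    f.comp (φ g).toMonoidHom = (MulAut.conj (f' g)).toMonoidHom.comp f := by
  simp only [MonoidHom.ext_iff, MonoidHom.comp_apply, MulEquiv.coe_toMonoidHom,
    MulAut.conj_apply] at h ⊢
  have hg : g ∈ Subgroup.closure S := hS ▸ Subgroup.mem_top g
  induction hg using Subgroup.closure_induction with
  | mem g hg => exact h g hg
  | one => simp
  | mul a b _ _ ha hb => intro n; simp [ha, hb, mul_assoc]
  | inv a _ ha =>
    intro n
    have hn := ha ((φ a)⁻¹ n)
    rw [MulAut.apply_inv_self] at hn
    simp [hn, mul_assoc]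

end SemidirectProduct

section ZModPowers

variable {n : ℕ} {G : Type*} [Group G]

lemma closure_ofAdd_one_zmod_eq_top (n : ℕ) :
    Subgroup.closure {ofAdd (1 : ZMod n)} = ⊤ := by
  rw [← Subgroup.zpowers_eq_closure, Subgroup.eq_top_iff']
  intro k
  exact ⟨(k.toAdd.cast : ℤ), toAdd.injective (by simp)⟩

/-- The homomorphism `ℤ/n → G`, `k ↦ x ^ k`, attached to an element `x` with `x ^ n = 1`. -/
def zmodPowersHom (x : G) (hx : x ^ n = 1) : Multiplicative (ZMod n) →* G :=
  AddMonoidHom.toMultiplicativeLeft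
    (ZMod.lift n ⟨zmultiplesHom (Additive G) (Additive.ofMul x), by simp [← ofMul_pow, hx]⟩)

lemma zmodPowersHom_ofAdd_intCast (x : G) (hx : x ^ n = 1) (k : ℤ) :
    zmodPowersHom x hx (ofAdd (k : ZMod n)) = x ^ k := by
  simp [zmodPowersHom]

lemma zmodPowersHom_ofAdd_one (x : G) (hx : x ^ n = 1) :
    zmodPowersHom x hx (ofAdd 1) = x := by
  simpa using zmodPowersHom_ofAdd_intCast x hx 1

lemma zmodPowersHom_injective {x : G} (hx : orderOf x = n) :
    Function.Injective (zmodPowersHom x (hx ▸ pow_orderOf_eq_one x)) := by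
  rw [injective_iff_map_eq_one]
  intro k hk
  obtain ⟨m, hm⟩ := ZMod.intCast_surjective k.toAdd
  obtain rfl : k = ofAdd (m : ZMod n) := hm ▸ rfl
  rw [zmodPowersHom_ofAdd_intCast, ← orderOf_dvd_iff_zpow_eq_one, hx] at hk
  exact congrArg ofAdd ((ZMod.intCast_zmod_eq_zero_iff_dvd m n).mpr hk)

lemma commute_zmodPowersHom {x y : G} (hx : x ^ n = 1) (hy : y ^ n = 1) (h : Commute x y)
    (k l : Multiplicative (ZMod n)) : Commute (zmodPowersHom x hx k) (zmodPowersHom y hy l) := by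
  obtain ⟨a, ha⟩ := ZMod.intCast_surjective k.toAdd
  obtain ⟨b, hb⟩ := ZMod.intCast_surjective l.toAdd
  obtain rfl : k = ofAdd (a : ZMod n) := ha ▸ rfl
  obtain rfl : l = ofAdd (b : ZMod n) := hb ▸ rfl
  simpa only [zmodPowersHom_ofAdd_intCast] using h.zpow_zpow a b

end ZModPowers

section ZModPi

variable {n : ℕ} {ι G : Type*} [Group G]

lemma prod_ofAdd_single_zpow_cast [Fintype ι] [DecidableEq ι] (v : ι → ZMod n) :
    ∏ i, ofAdd (Pi.single i 1 : ι → ZMod n) ^ ((v i).cast : ℤ) = ofAdd v := by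
  apply toAdd.injective
  simp only [toAdd_prod, toAdd_zpow, toAdd_ofAdd, ← Pi.single_smul, zsmul_one,
    ZMod.intCast_zmod_cast]
  exact Finset.univ_sum_single v

lemma monoidHom_ext_ofAdd_single [Finite ι] [DecidableEq ι]
    {f g : Multiplicative (ι → ZMod n) →* G}
    (h : ∀ i, f (ofAdd (Pi.single i 1)) = g (ofAdd (Pi.single i 1))) : f = g := by
  have := Fintype.ofFinite ι
  refine MonoidHom.ext fun v => ?_
  change v ∈ f.eqLocus g
  rw [← ofAdd_toAdd v, ← prod_ofAdd_single_zpow_cast]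
  exact Subgroup.prod_mem _ fun i _ => Subgroup.zpow_mem _ (h i) _

variable [Fintype ι]

/-- The homomorphism `(ℤ/n)^ι → G` sending the basis vectors to a given commuting family of
elements `s i` with `s i ^ n = 1`. -/
def zmodPiHom (s : ι → G) (hs : ∀ i, s i ^ n = 1)
    (hcomm : Pairwise fun i j => Commute (s i) (s j)) :
    Multiplicative (ι → ZMod n) →* G :=
  (MonoidHom.noncommPiCoprod (fun i => zmodPowersHom (s i) (hs i))
    fun i j hij => commute_zmodPowersHom (hs i) (hs j) (hcomm hij)).comp
    (MulEquiv.piMultiplicative fun _ => ZMod n).toMonoidHom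

lemma zmodPiHom_single [DecidableEq ι] (s : ι → G) (hs : ∀ i, s i ^ n = 1)
    (hcomm : Pairwise fun i j => Commute (s i) (s j)) (i : ι) :
    zmodPiHom s hs hcomm (ofAdd (Pi.single i 1)) = s i := by
  have h : MulEquiv.piMultiplicative (fun _ => ZMod n) (ofAdd (Pi.single i 1)) =
      Pi.mulSingle i (ofAdd 1) := rfl
  simp only [zmodPiHom, MonoidHom.comp_apply, MulEquiv.coe_toMonoidHom, h]
  exact (MonoidHom.noncommPiCoprod_mulSingle _ i _).trans (zmodPowersHom_ofAdd_one _ _)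

lemma zmodPiHom_comp_eq_conj_comp {s : ι → G} (hs : ∀ i, s i ^ n = 1)
    (hcomm : Pairwise fun i j => Commute (s i) (s j)) {σ : Perm ι} {a : G}
    (ha : ∀ i, a * s (σ i) * a⁻¹ = s i)
    {ψ : Multiplicative (ι → ZMod n) →* Multiplicative (ι → ZMod n)}
    (hψ : ∀ v, ψ (ofAdd v) = ofAdd (v ∘ σ)) :
    (zmodPiHom s hs hcomm).comp ψ = (MulAut.conj a).toMonoidHom.comp (zmodPiHom s hs hcomm) := by
  classical
  refine monoidHom_ext_ofAdd_single fun j => ?_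
  obtain ⟨i, rfl⟩ := σ.surjective j
  have hsingle : (Pi.single (σ i) 1 : ι → ZMod n) ∘ σ = Pi.single i 1 := by
    simp [Pi.single_comp_equiv]
  simp [hψ, hsingle, zmodPiHom_single, ha]

end ZModPi

/-- The half-turn of the cube about the `i`-th coordinate axis, as a permutation of the four body
diagonals: diagonal `0` is spanned by `(1, 1, 1)`, and diagonal `j + 1` by its image under the
half-turn about axis `j`. -/
def halfTurn (i : Fin 3) : alternatingGroup (Fin 4) :=
  ⟨swap 0 i.succ * swap (i + 1).succ (i + 2).succ,
    Perm.mul_mem_alternatingGroup_of_isSwap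
      ⟨_, _, (Fin.succ_ne_zero i).symm, rfl⟩ ⟨_, _, by simp, rfl⟩⟩

/-- The rotation of the cube by a third of a turn about the body diagonal `0`, taking axis `i + 1`
to axis `i`; it permutes the body diagonals with the labels of `halfTurn`. -/
def thirdTurn : alternatingGroup (Fin 4) :=
  ⟨swap 1 2 * swap 1 3, (Perm.isThreeCycle_swap_mul_swap_same
    (by decide) (by decide) (by decide)).mem_alternatingGroup⟩

lemma orderOf_thirdTurn : orderOf thirdTurn = 3 :=
  orderOf_eq_prime (by decide) (by decide)

lemma thirdTurn_conj_halfTurn (i : Fin 3) :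
    thirdTurn * halfTurn (i + 1) * thirdTurn⁻¹ = halfTurn i := by
  decide +revert

/-- The reflection in the `i`-th coordinate, as an element of `{±1} × A₄`: minus a half-turn. -/
def coordReflection (i : Fin 3) : Multiplicative (ZMod 2) × alternatingGroup (Fin 4) :=
  (ofAdd 1, halfTurn i)

lemma coordReflection_sq (i : Fin 3) : coordReflection i ^ 2 = 1 := by
  decide +revert

lemma commute_coordReflection (i j : Fin 3) :
    Commute (coordReflection i) (coordReflection j) := by
  change coordReflection i * coordReflection j = coordReflection j * coordReflection i
  decide +revert

lemma coordReflection_independent (a b c : ZMod 2)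
    (h : coordReflection 0 ^ (a.cast : ℤ) * coordReflection 1 ^ (b.cast : ℤ) *
      coordReflection 2 ^ (c.cast : ℤ) = 1) : a = 0 ∧ b = 0 ∧ c = 0 := by
  decide +revert

/-- The embedding of `(ℤ/2)³` into `{±1} × A₄` as the group generated by the coordinate
reflections. -/
def coordReflectionHom :
    Multiplicative (Fin 3 → ZMod 2) →* Multiplicative (ZMod 2) × alternatingGroup (Fin 4) :=
  zmodPiHom coordReflection coordReflection_sq fun i j _ => commute_coordReflection i j

lemma coordReflectionHom_single (i : Fin 3) :
    coordReflectionHom (ofAdd (Pi.single i 1)) = coordReflection i :=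
  zmodPiHom_single _ _ _ i

lemma coordReflectionHom_injective : Function.Injective coordReflectionHom := by
  rw [injective_iff_map_eq_one]
  intro v hv
  rw [← ofAdd_toAdd v, ← prod_ofAdd_single_zpow_cast, Fin.prod_univ_three] at hv
  simp only [map_mul, map_zpow, coordReflectionHom_single] at hv
  obtain ⟨h₀, h₁, h₂⟩ := coordReflection_independent _ _ _ hv
  apply toAdd.injective
  ext i
  fin_cases i
  exacts [h₀, h₁, h₂]

/-- The embedding of `ℤ/3` into `{±1} × A₄` as the rotations about the body diagonal `0`. -/
def thirdTurnHom :
    Multiplicative (ZMod 3) →* Multiplicative (ZMod 2) × alternatingGroup (Fin 4) :=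
  (MonoidHom.inr _ _).comp
    (zmodPowersHom thirdTurn (orderOf_thirdTurn ▸ pow_orderOf_eq_one thirdTurn))

lemma thirdTurnHom_ofAdd_one : thirdTurnHom (ofAdd 1) = (1, thirdTurn) := by
  simp [thirdTurnHom, zmodPowersHom_ofAdd_one]

lemma thirdTurnHom_injective : Function.Injective thirdTurnHom :=
  (Prod.mk_right_injective 1).comp (zmodPowersHom_injective orderOf_thirdTurn)

lemma thirdTurnHom_conj_coordReflection (i : Fin 3) :
    thirdTurnHom (ofAdd 1) * coordReflection (i + 1) * (thirdTurnHom (ofAdd 1))⁻¹ =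
      coordReflection i := by
  simp [thirdTurnHom_ofAdd_one, coordReflection, thirdTurn_conj_halfTurn]

/-- Let `ℤ/3` act on `(ℤ/2)³ = (Fin 3 → ℤ/2)` by cyclically permuting the coordinates
(the generator sends `v` to `fun i => v (i + 1)`).  The corresponding semidirect product
`(ℤ/2)³ ⋊ ℤ/3` is isomorphic to `ℤ/2 × A₄`. -/
theorem semidirect_Z2cubed_Z3_iso_Z2_prod_A4
    (φ : Multiplicative (ZMod 3) →* MulAut (Multiplicative (Fin 3 → ZMod 2)))
    (hφ : ∀ v : Fin 3 → ZMod 2,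
      Multiplicative.toAdd (φ (Multiplicative.ofAdd 1) (Multiplicative.ofAdd v)) =
        fun i => v (i + 1)) :
    Nonempty (SemidirectProduct (Multiplicative (Fin 3 → ZMod 2)) (Multiplicative (ZMod 3)) φ
      ≃* Multiplicative (ZMod 2) × alternatingGroup (Fin 4)) := by
  have hequivariant := comp_mulAut_eq_conj_comp_of_closure_eq_top (φ := φ)
    (f := coordReflectionHom) (f' := thirdTurnHom) (closure_ofAdd_one_zmod_eq_top 3) <| by
      rintro _ rfl
      exact zmodPiHom_comp_eq_conj_comp (σ := Equiv.addRight 1) _ _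
        thirdTurnHom_conj_coordReflection fun v => toAdd.injective (hφ v)
  have hcardN : Nat.card (Multiplicative (Fin 3 → ZMod 2)) = 8 := by
    simp [Nat.card_eq_fintype_card, Fintype.card_multiplicative]
  have hcardG : Nat.card (Multiplicative (ZMod 3)) = 3 := by
    simp [Nat.card_eq_fintype_card, Fintype.card_multiplicative]
  have hinjective := semidirectProduct_lift_injective_of_coprime_card hequivariant
    coordReflectionHom_injective thirdTurnHom_injective (by rw [hcardN, hcardG]; decide)
  refine ⟨MulEquiv.ofBijective _ ((Nat.bijective_iff_injective_and_card _).mpr ⟨hinjective, ?_⟩)⟩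
  rw [SemidirectProduct.card, hcardN, hcardG, Nat.card_prod, nat_card_alternatingGroup]
  simp [Nat.card_eq_fintype_card, Fintype.card_multiplicative, Nat.factorial]
end
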